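/- arXiv:1908.05573 — 3 statements merged into one kernel-verified Lean document; each statement's English description precedes it below -/
import Mathlib

section
/- Let B be a planar Brownian motion. Then almost surely the range {B(t) : t ∈ [0,1]} ⊆ ℝ² has two-dimensional Lebesgue measure zero. -/
open MeasureTheory ProbabilityTheory

/-- `B` is a planar Brownian motion (on times `t ≥ 0`) under the probability measure `P`:
its two coordinate processes are independent, each path is continuous on `[0, ∞)`, and each
coordinate is a centered Gaussian process with covariance `Cov(Bⁱ_s, Bⁱ_t) = min s t`, i.e.
every finite linear combination `∑ cᵢ Bⁱ(tᵢ)` is centered Gaussian with variance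
`∑ᵢ ∑ⱼ cᵢ cⱼ min (tᵢ) (tⱼ)`. -/
def IsPlanarBrownianMotion {Ω : Type*} [MeasurableSpace Ω] (P : Measure Ω)
    (B : Ω → ℝ → ℝ × ℝ) : Prop :=
  (∀ ω, ContinuousOn (B ω) (Set.Ici 0)) ∧
  IndepFun (fun ω => (fun t => (B ω t).1)) (fun ω => (fun t => (B ω t).2)) P ∧
  (∀ (n : ℕ) (t : Fin n → ℝ), (∀ i, 0 ≤ t i) → ∀ c : Fin n → ℝ,
    Measure.map (fun ω => ∑ i, c i * (B ω (t i)).1) P =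
      gaussianReal 0 (∑ i, ∑ j, c i * c j * min (t i) (t j)).toNNReal) ∧
  (∀ (n : ℕ) (t : Fin n → ℝ), (∀ i, 0 ≤ t i) → ∀ c : Fin n → ℝ,
    Measure.map (fun ω => ∑ i, c i * (B ω (t i)).2) P =
      gaussianReal 0 (∑ i, ∑ j, c i * c j * min (t i) (t j)).toNNReal)

open scoped NNReal ENNReal

namespace ProbabilityTheory

variable {Ω : Type*} [MeasurableSpace Ω] {P : Measure Ω}

/-- A process all of whose finite linear combinations are centered Gaussian with the variance
prescribed by the covariance `min s t` is pre-Brownian. -/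
lemma isPreBrownianReal_of_map_sum_eq_gaussianReal [IsProbabilityMeasure P] {X : ℝ≥0 → Ω → ℝ}
    (h : ∀ (n : ℕ) (t : Fin n → ℝ≥0) (c : Fin n → ℝ),
      P.map (fun ω ↦ ∑ i, c i * X (t i) ω) =
        gaussianReal 0 (∑ i, ∑ j, c i * c j * min (t i : ℝ) (t j)).toNNReal) :
    IsPreBrownianReal X P := by
  have hmap t : P.map (X t) = gaussianReal 0 t := by
    simpa using h 1 (fun _ ↦ t) (fun _ ↦ 1)
  have hmeas t : AEMeasurable (X t) P :=
    AEMeasurable.of_map_ne_zero (by rw [hmap]; exact NeZero.ne _)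
  have hlaw t : HasLaw (X t) (gaussianReal 0 t) P := ⟨hmeas t, hmap t⟩
  have hmem t : MemLp (X t) 2 P := (hlaw t).hasGaussianLaw.memLp_two
  have hvar t : Var[X t; P] = t := by
    rw [(hlaw t).variance_eq, variance_id_gaussianReal]
  refine IsGaussianProcess.isPreBrownianReal_of_covariance ⟨fun I ↦ ⟨?_⟩⟩ (fun t ↦ ?_)
    fun s t hst ↦ ?_
  · refine isGaussian_of_map_eq_gaussianReal fun L ↦ ⟨0,
      (∑ i, ∑ j, L (Pi.single (I.equivFin.symm i) 1) * L (Pi.single (I.equivFin.symm j) 1) *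
        min ((I.equivFin.symm i : ℝ≥0) : ℝ) (I.equivFin.symm j : ℝ≥0)).toNNReal, ?_⟩
    have hI : AEMeasurable (fun ω ↦ I.restrict (X · ω)) P :=
      aemeasurable_pi_lambda _ fun i : I ↦ hmeas i
    rw [← h, AEMeasurable.map_map_of_aemeasurable (by fun_prop) hI]
    congr 1 with ω
    rw [Function.comp_apply,
      I.equivFin.symm.sum_comp (fun i : I ↦ L (Pi.single i 1) * X i ω)]
    conv_lhs => rw [pi_eq_sum_univ' (I.restrict (X · ω))]
    simp only [map_sum, map_smul, Finset.restrict, smul_eq_mul]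
    refine Finset.sum_congr rfl fun i _ ↦ ?_
    rw [mul_comm]
  · rw [(hlaw t).integral_eq, integral_id_gaussianReal]
  · have hsum := h 2 ![s, t] ![1, 1]
    simp only [Fin.sum_univ_two, Matrix.cons_val_zero, Matrix.cons_val_one, one_mul,
      min_self, mul_one] at hsum
    have hadd : HasLaw (X s + X t) _ P := ⟨(hmeas s).add (hmeas t), hsum⟩
    have hv := hadd.variance_eq
    rw [variance_id_gaussianReal, variance_add (hmem s) (hmem t), hvar, hvar,
      min_eq_left (by exact_mod_cast hst), min_eq_right (by exact_mod_cast hst),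
      Real.coe_toNNReal _ (by positivity)] at hv
    linarith

/-- The finite-dimensional laws of a pre-Brownian motion determine its law along any
countable family of times. -/
lemma IsPreBrownianReal.map_comp_eq {X Y : ℝ≥0 → Ω → ℝ} (hX : IsPreBrownianReal X P)
    (hY : IsPreBrownianReal Y P) {ι : Type*} [Countable ι] (τ : ι → ℝ≥0) :
    P.map (fun ω i ↦ X (τ i) ω) = P.map (fun ω i ↦ Y (τ i) ω) := by
  classical
  have := hX.isGaussianProcess.isProbabilityMeasure
  have key {Z : ℝ≥0 → Ω → ℝ} (hZ : IsPreBrownianReal Z P) (I : Finset ι) :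
      P.map (fun ω ↦ I.restrict (fun i ↦ Z (τ i) ω)) =
        (BrownianReal.projectiveFamily (I.image τ)).map
          (fun w (i : I) ↦ w ⟨τ i, Finset.mem_image_of_mem τ i.2⟩) := by
    rw [← (hZ.hasLaw _).map_eq, AEMeasurable.map_map_of_aemeasurable
      (Measurable.aemeasurable (by fun_prop)) (hZ.hasLaw _).aemeasurable]
    rfl
  rw [map_eq_iff_forall_finset_map_restrict_eq
    (X := fun i ↦ X (τ i)) (Y := fun i ↦ Y (τ i))
    (aemeasurable_pi_lambda _ fun _ ↦ hX.aemeasurable _)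
    (aemeasurable_pi_lambda _ fun _ ↦ hY.aemeasurable _)]
  intro I
  rw [key hX, key hY]

/-- Time reversal of a pre-Brownian motion on `[0, 1]`, continued by its increments after
time `1`. -/
lemma IsPreBrownianReal.reverse {X : ℝ≥0 → Ω → ℝ} (hX : IsPreBrownianReal X P) :
    IsPreBrownianReal (fun t ω ↦ X (1 - t) ω - X 1 ω + (X (max t 1) ω - X 1 ω)) P := by
  classical
  have := hX.isGaussianProcess.isProbabilityMeasure
  have hmem t : MemLp (X t) 2 P := (hX.isGaussianProcess.hasGaussianLaw_eval t).memLp_two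
  refine IsGaussianProcess.isPreBrownianReal_of_covariance ?_ (fun t ↦ ?_) fun s t hst ↦ ?_
  · refine hX.isGaussianProcess.of_isGaussianProcess fun t ↦ ⟨{1 - t, 1, max t 1},
      .proj ⟨1 - t, by simp⟩ - .proj ⟨1, by simp⟩ +
        (.proj ⟨max t 1, by simp⟩ - .proj ⟨1, by simp⟩), fun ω ↦ by simp⟩
  · have hi t : Integrable (X t) P := hX.integrable_eval t
    rw [integral_add, integral_sub, integral_sub] <;> try simp only [hX.integral_eval]
    · simp
    all_goals first | exact hi _ | exact (hi _).sub (hi _)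
  · have hsub s t : MemLp (fun ω ↦ X s ω - X t ω) 2 P := (hmem s).sub (hmem t)
    change cov[(fun ω ↦ X (1 - s) ω - X 1 ω) + (fun ω ↦ X (max s 1) ω - X 1 ω),
      (fun ω ↦ X (1 - t) ω - X 1 ω) + (fun ω ↦ X (max t 1) ω - X 1 ω); P] = s
    rw [covariance_add_left (hsub _ _) (hsub _ _) ((hsub _ _).add (hsub _ _)),
      covariance_add_right (hsub _ _) (hsub _ _) (hsub _ _),
      covariance_add_right (hsub _ _) (hsub _ _) (hsub _ _)]
    simp only [covariance_fun_sub_fun_sub (hmem _) (hmem _) (hmem _) (hmem _),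
      hX.covariance_eval, NNReal.coe_min, NNReal.coe_max, NNReal.coe_sub_def, NNReal.coe_one]
    have hs : (0 : ℝ) ≤ s := s.2
    have hst' : (s : ℝ) ≤ t := hst
    grind

lemma enorm_pi_le_iff {ι : Type*} [Fintype ι] {x : ι → ℝ} {r : ℝ≥0∞} :
    ‖x‖ₑ ≤ r ↔ ∀ i, ‖x i‖ₑ ≤ r := by
  simp_rw [← edist_zero_right, edist_pi_le_iff, Pi.zero_apply]

lemma enorm_apply_le_enorm_pi {ι : Type*} [Fintype ι] (x : ι → ℝ) (i : ι) : ‖x i‖ₑ ≤ ‖x‖ₑ :=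
  enorm_pi_le_iff.1 le_rfl i

/-- A quantitative form of Fernique's theorem for centered Gaussian measures: the second moment
of the norm is bounded in terms of a ball of measure at least `3 / 4` only. -/
lemma exists_lintegral_enorm_sq_le_of_isGaussian (a : ℝ) (ha : 0 < a) :
    ∃ K : ℝ≥0∞, K ≠ ∞ ∧ ∀ (ι : Type) [Fintype ι] (μ : Measure (ι → ℝ)) [IsGaussian μ],
      μ[id] = 0 → 3 / 4 ≤ μ {x | ‖x‖ ≤ a} → ∫⁻ x, ‖x‖ₑ ^ 2 ∂μ ≤ K := by
  have hc : (2 : ℝ≥0∞)⁻¹ < 3 / 4 := by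
    rw [← ENNReal.toReal_lt_toReal (by simp) (by finiteness)]
    norm_num
  have hc1 : (3 / 4 : ℝ≥0∞) < 1 := by
    rw [← ENNReal.toReal_lt_toReal (by finiteness) (by simp)]
    norm_num
  set b : ℝ := Fernique.logRatio (3 / 4) * a⁻¹ ^ 2 with hb
  have hb_pos : 0 < b := mul_pos (Fernique.logRatio_pos hc hc1) (by positivity)
  refine ⟨ENNReal.ofReal b⁻¹ * (.ofReal (Real.exp (Fernique.logRatio (3 / 4))) + ∑' n : ℕ,
    .ofReal (Real.exp (-2⁻¹ * Real.log ((3 / 4) / (1 - 3 / 4) : ℝ≥0∞).toReal * 2 ^ n))),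
    ENNReal.mul_ne_top (by simp) (ENNReal.add_ne_top.2 ⟨by simp, ?_⟩), fun ι _ μ _ hμ hμa ↦ ?_⟩
  · refine (Summable.tsum_ofReal_lt_top <| Real.summable_exp_nat_mul_of_ge ?_
      fun i ↦ mod_cast (Nat.lt_pow_self (by simp)).le).ne
    refine mul_neg_of_neg_of_pos (by simp) (Real.log_pos ?_)
    rw [ENNReal.toReal_div, ENNReal.toReal_sub_of_le hc1.le (by simp)]
    norm_num
  · refine le_trans ?_ (mul_le_mul_right (lintegral_exp_mul_sq_norm_le_of_map_rotation_eq_self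
      (IsGaussian.map_rotation_eq_self hμ _) hμa hc) _)
    rw [← lintegral_const_mul' _ _ (by simp)]
    refine lintegral_mono fun x ↦ ?_
    rw [← ENNReal.ofReal_mul (by positivity), ← ofReal_norm, ← ENNReal.ofReal_pow (norm_nonneg x)]
    refine ENNReal.ofReal_le_ofReal ?_
    have hexp := Real.add_one_le_exp (b * ‖x‖ ^ 2)
    calc ‖x‖ ^ 2 = b⁻¹ * (b * ‖x‖ ^ 2) := by field_simp
      _ ≤ b⁻¹ * Real.exp (b * ‖x‖ ^ 2) := by gcongr; linarith

/-- A centered Gaussian sequence which is almost surely bounded has a supremum with a finite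
second moment. -/
lemma IsGaussianProcess.lintegral_iSup_enorm_sq_ne_top {Z : ℕ → Ω → ℝ}
    (hZ : IsGaussianProcess Z P) (hmean : ∀ n, P[Z n] = 0)
    (hbdd : ∀ᵐ ω ∂P, ⨆ n, ‖Z n ω‖ₑ ≠ ∞) :
    ∫⁻ ω, (⨆ n, ‖Z n ω‖ₑ) ^ 2 ∂P ≠ ∞ := by
  have := hZ.isProbabilityMeasure
  obtain ⟨m, hm⟩ : ∃ m : ℕ, 3 / 4 < P {ω | ⨆ n, ‖Z n ω‖ₑ ≤ (m + 1 : ℕ)} := by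
    have hmono : Monotone fun m : ℕ ↦ {ω | ⨆ n, ‖Z n ω‖ₑ ≤ (m + 1 : ℕ)} :=
      fun m m' h ω (hω : ⨆ n, ‖Z n ω‖ₑ ≤ (m + 1 : ℕ)) ↦
        hω.trans (by exact_mod_cast Nat.succ_le_succ h)
    have hlim := tendsto_measure_iUnion_atTop (μ := P) hmono
    have hfull : P (⋃ m : ℕ, {ω | ⨆ n, ‖Z n ω‖ₑ ≤ (m + 1 : ℕ)}) = 1 := by
      rw [← measure_univ (μ := P)]
      refine measure_congr (Filter.eventuallyEq_univ.2 ?_)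
      filter_upwards [hbdd] with ω hω
      obtain ⟨m, hm⟩ := ENNReal.exists_nat_gt hω
      exact Set.mem_iUnion.2 ⟨m, hm.le.trans (by exact_mod_cast Nat.le_succ m)⟩
    rw [hfull] at hlim
    refine (hlim.eventually_const_lt ?_).exists
    rw [← ENNReal.toReal_lt_toReal (by finiteness) (by simp)]
    norm_num
  obtain ⟨K, hK, hbound⟩ := exists_lintegral_enorm_sq_le_of_isGaussian (m + 1 : ℕ) (by positivity)
  refine ne_top_of_le_ne_top hK ?_
  have hsup ω : (⨆ n, ‖Z n ω‖ₑ) ^ 2 = ⨆ N, ‖(Finset.range N).restrict (Z · ω)‖ₑ ^ 2 := by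
    rw [ENNReal.iSup_pow]
    refine le_antisymm (iSup_le fun n ↦ le_iSup_of_le (n + 1) ?_)
      (iSup_le fun N ↦ ?_)
    · gcongr
      exact enorm_apply_le_enorm_pi ((Finset.range (n + 1)).restrict (Z · ω)) ⟨n, by simp⟩
    · rw [← ENNReal.iSup_pow]
      gcongr
      refine enorm_pi_le_iff.2 fun i ↦ le_iSup (fun n ↦ ‖Z n ω‖ₑ) i
  simp_rw [hsup]
  have hmeas N : AEMeasurable (fun ω ↦ (Finset.range N).restrict (Z · ω)) P :=
    (hZ.hasGaussianLaw _).aemeasurable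
  rw [lintegral_iSup' (fun N ↦ (hmeas N).enorm.pow_const 2)]
  · refine iSup_le fun N ↦ ?_
    have := (hZ.hasGaussianLaw (Finset.range N)).isGaussian_map
    rw [← lintegral_map' (f := fun x ↦ ‖x‖ₑ ^ 2) (by fun_prop) (hmeas N)]
    refine hbound _ _ ?_ ?_
    · rw [integral_map (hmeas N) (by fun_prop)]
      ext i
      simp only [id_eq, Finset.restrict_def]
      rw [eval_integral fun i : Finset.range N ↦ (hZ.hasGaussianLaw_eval i).integrable]
      exact hmean i
    · rw [Measure.map_apply_of_aemeasurable (hmeas N) (measurableSet_le (by fun_prop) (by fun_prop))]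
      refine hm.le.trans (measure_mono fun ω hω ↦ ?_)
      refine (pi_norm_le_iff_of_nonneg (by positivity)).2 fun i ↦ ?_
      have hi := (le_iSup (fun n ↦ ‖Z n ω‖ₑ) i).trans hω
      rw [← ofReal_norm, ENNReal.ofReal_le_iff_le_toReal (by finiteness), ENNReal.toReal_natCast] at hi
      exact hi
  · filter_upwards with ω
    intro N N' h
    refine pow_le_pow_left' ?_ 2
    refine enorm_pi_le_iff.2 fun i ↦ ?_
    exact enorm_apply_le_enorm_pi ((Finset.range N').restrict (Z · ω))
      ⟨i, Finset.range_mono h i.2⟩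

/-- The closure of the set of points of a planar sequence given by its two coordinates. -/
def seqClosure (p : (ℕ → ℝ) × (ℕ → ℝ)) : Set (ℝ × ℝ) :=
  closure (Set.range fun n ↦ (p.1 n, p.2 n))

lemma isClosed_seqClosure (p : (ℕ → ℝ) × (ℕ → ℝ)) : IsClosed (seqClosure p) :=
  isClosed_closure

lemma measurableSet_mem_seqClosure :
    MeasurableSet {z : ((ℕ → ℝ) × (ℕ → ℝ)) × (ℝ × ℝ) | z.2 ∈ seqClosure z.1} := by
  have : {z : ((ℕ → ℝ) × (ℕ → ℝ)) × (ℝ × ℝ) | z.2 ∈ seqClosure z.1} =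
      ⋂ k : ℕ, ⋃ n : ℕ, {z | dist z.2 (z.1.1 n, z.1.2 n) < 1 / ((k : ℝ) + 1)} := by
    ext z
    simp only [seqClosure, Set.mem_ofPred_eq, Set.mem_iInter, Set.mem_iUnion]
    rw [mem_closure_iff_nhds_basis Metric.nhds_basis_ball_inv_nat_succ]
    simp [dist_comm]
  rw [this]
  exact .iInter fun k ↦ .iUnion fun n ↦ measurableSet_lt (by fun_prop) (by fun_prop)

lemma measurable_volume_seqClosure :
    Measurable fun p ↦ volume (seqClosure p) :=
  measurable_measure_prodMk_left measurableSet_mem_seqClosure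

open scoped Pointwise in
lemma volume_seqClosure_smul (c : ℝ) (p : (ℕ → ℝ) × (ℕ → ℝ)) :
    volume (seqClosure (c • p)) = ENNReal.ofReal (c ^ 2) * volume (seqClosure p) := by
  have : seqClosure (c • p) = c • seqClosure p := by
    rw [seqClosure, seqClosure, ← closure_smul₀, ← Set.image_smul, ← Set.range_comp]
    rfl
  rw [this, Measure.addHaar_smul]
  simp

lemma volume_seqClosure_le (p : (ℕ → ℝ) × (ℕ → ℝ)) :
    volume (seqClosure p) ≤ 4 * ((⨆ n, ‖p.1 n‖ₑ) ^ 2 + (⨆ n, ‖p.2 n‖ₑ) ^ 2) := by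
  set a := ⨆ n, ‖p.1 n‖ₑ
  set b := ⨆ n, ‖p.2 n‖ₑ
  have hsub : seqClosure p ⊆ Metric.closedEBall (0 : ℝ) a ×ˢ Metric.closedEBall (0 : ℝ) b := by
    refine closure_minimal ?_ (Metric.isClosed_closedEBall.prod Metric.isClosed_closedEBall)
    rintro _ ⟨n, rfl⟩
    simp only [Set.mem_prod, Metric.mem_closedEBall, edist_zero_right]
    exact ⟨le_iSup (fun n ↦ ‖p.1 n‖ₑ) n, le_iSup (fun n ↦ ‖p.2 n‖ₑ) n⟩
  refine (measure_mono hsub).trans ?_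
  rw [Measure.volume_eq_prod, Measure.prod_prod, Real.volume_closedEBall, Real.volume_closedEBall]
  calc 2 * a * (2 * b) = 4 * (a * b) := by ring
    _ ≤ 4 * (a ^ 2 + b ^ 2) := by
      gcongr
      rcases le_total a b with h | h
      · exact (mul_le_mul_left h b).trans (by rw [← sq]; exact le_add_self)
      · exact (mul_le_mul_right h a).trans (by rw [← sq]; exact le_self_add)

lemma seqClosure_sub (p : (ℕ → ℝ) × (ℕ → ℝ)) (v : ℝ × ℝ) :
    seqClosure (fun n ↦ p.1 n - v.1, fun n ↦ p.2 n - v.2) = (· + v) ⁻¹' seqClosure p := by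
  have := (Homeomorph.addRight v).preimage_closure (Set.range fun n ↦ (p.1 n, p.2 n))
  rw [Homeomorph.coe_addRight] at this
  rw [seqClosure, seqClosure, this]
  congr 1
  ext x
  simp only [Set.mem_range, Set.mem_preimage, Prod.ext_iff, Prod.fst_add, Prod.snd_add,
    sub_eq_iff_eq_add]

lemma volume_seqClosure_sub_inter (p q : (ℕ → ℝ) × (ℕ → ℝ)) (v : ℝ × ℝ) :
    volume (seqClosure (fun n ↦ p.1 n - v.1, fun n ↦ p.2 n - v.2) ∩
      seqClosure (fun n ↦ q.1 n - v.1, fun n ↦ q.2 n - v.2)) =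
    volume (seqClosure p ∩ seqClosure q) := by
  rw [seqClosure_sub, seqClosure_sub, ← Set.preimage_inter, measure_preimage_add_right]

lemma seqClosure_eq_range {K : Type*} [TopologicalSpace K] [CompactSpace K] {τ : ℕ → K}
    (hτ : DenseRange τ) {g : K → ℝ × ℝ} (hg : Continuous g) :
    seqClosure (fun n ↦ (g (τ n)).1, fun n ↦ (g (τ n)).2) = Set.range g := by
  rw [seqClosure, ← Set.image_univ (f := g), ← hτ.closure_range,
    ← hg.isClosedMap.closure_image_eq_of_continuous hg, ← Set.range_comp]
  rfl

/-- If two independent copies of a random measurable set almost surely have a negligible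
intersection, then the random set is almost surely negligible. -/
lemma ae_measure_section_eq_zero {S E : Type*} [MeasurableSpace S] [MeasurableSpace E]
    {m : Measure S} [SFinite m] {μ : Measure E} [SFinite μ] {T : Set (S × E)}
    (hT : MeasurableSet T)
    (h : ∀ᵐ z ∂m.prod m, μ ((Prod.mk z.1 ⁻¹' T) ∩ (Prod.mk z.2 ⁻¹' T)) = 0) :
    ∀ᵐ p ∂m, μ (Prod.mk p ⁻¹' T) = 0 := by
  have hU : MeasurableSet {z : (S × S) × E | (z.1.1, z.2) ∈ T ∧ (z.1.2, z.2) ∈ T} :=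
    (measurable_fst.fst.prodMk measurable_snd hT).inter
      (measurable_fst.snd.prodMk measurable_snd hT)
  have hnull : (m.prod m).prod μ {z | (z.1.1, z.2) ∈ T ∧ (z.1.2, z.2) ∈ T} = 0 :=
    (Measure.measure_prod_null hU).2 h
  rw [Measure.prod_apply_symm hU, lintegral_eq_zero_iff (measurable_measure_prodMk_right hU)]
    at hnull
  change (fun p ↦ μ (Prod.mk p ⁻¹' T)) =ᵐ[m] 0
  rw [← Measure.measure_prod_null hT, Measure.prod_apply_symm hT,
    lintegral_eq_zero_iff (measurable_measure_prodMk_right hT)]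
  filter_upwards [hnull] with x hx
  have : (fun p ↦ (p, x)) ⁻¹' {z : (S × S) × E | (z.1.1, z.2) ∈ T ∧ (z.1.2, z.2) ∈ T} =
    ((fun p ↦ (p, x)) ⁻¹' T) ×ˢ ((fun p ↦ (p, x)) ⁻¹' T) := rfl
  rw [this, Measure.prod_prod] at hx
  simpa using hx

lemma measurePreserving_prodProdProdComm {α β γ δ : Type*} [MeasurableSpace α]
    [MeasurableSpace β] [MeasurableSpace γ] [MeasurableSpace δ] (μa : Measure α) (μb : Measure β)
    (μc : Measure γ) (μd : Measure δ) [SFinite μa] [SFinite μb] [SFinite μc] [SFinite μd] :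
    MeasurePreserving (fun z : (α × β) × (γ × δ) ↦ ((z.1.1, z.2.1), (z.1.2, z.2.2)))
      ((μa.prod μb).prod (μc.prod μd)) ((μa.prod μc).prod (μb.prod μd)) := by
  have hswap : MeasurePreserving (fun z : β × (γ × δ) ↦ (z.2.1, (z.1, z.2.2)))
      (μb.prod (μc.prod μd)) (μc.prod (μb.prod μd)) :=
    ((measurePreserving_prodAssoc μc μb μd).comp
      (Measure.measurePreserving_swap.prod (.id μd))).comp
      ((measurePreserving_prodAssoc μb μc μd).symm _)
  exact (((measurePreserving_prodAssoc μa μc (μb.prod μd)).symm _).comp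
    ((MeasurePreserving.id μa).prod hswap)).comp
    (measurePreserving_prodAssoc μa μb (μc.prod μd))

section PlanarPath

variable {X Y : ℝ≥0 → Ω → ℝ}

/-- The sequence of values of a pair of processes along a sequence of times. -/
def planarSeq {Ω : Type*} (X Y : ℝ≥0 → Ω → ℝ) (s : ℕ → ℝ≥0) (ω : Ω) : (ℕ → ℝ) × (ℕ → ℝ) :=
  (fun n ↦ X (s n) ω, fun n ↦ Y (s n) ω)

lemma IsPreBrownianReal.aemeasurable_comp (hX : IsPreBrownianReal X P) (s : ℕ → ℝ≥0) :
    AEMeasurable (fun ω n ↦ X (s n) ω) P :=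
  aemeasurable_pi_lambda _ fun _ ↦ hX.aemeasurable _

lemma IsPreBrownianReal.map_planarSeq [IsProbabilityMeasure P] {Z : ℝ≥0 → Ω → ℝ}
    (hX : IsPreBrownianReal X P)
    (hY : IsPreBrownianReal Y P) (hZ : IsPreBrownianReal Z P) (s : ℕ → ℝ≥0)
    (hXY : IndepFun (fun ω n ↦ X (s n) ω) (fun ω n ↦ Y (s n) ω) P) :
    P.map (planarSeq X Y s) =
      (P.map fun ω n ↦ Z (s n) ω).prod (P.map fun ω n ↦ Z (s n) ω) := by
  change P.map (fun ω ↦ (_, _)) = _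
  rw [hXY.map_prod_eq_prod_map_map (hX.aemeasurable_comp s) (hY.aemeasurable_comp s),
    hX.map_comp_eq hZ, hY.map_comp_eq hZ]

lemma seqClosure_planarSeq {Ω : Type*} {X Y : ℝ≥0 → Ω → ℝ} {ω : Ω}
    (hX : Continuous (X · ω)) (hY : Continuous (Y · ω))
    {K : Type*} [TopologicalSpace K] [CompactSpace K] {τ : ℕ → K} (hτ : DenseRange τ)
    {φ : K → ℝ≥0} (hφ : Continuous φ) :
    seqClosure (planarSeq X Y (φ ∘ τ) ω) = (fun t ↦ (X t ω, Y t ω)) '' Set.range φ := by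
  rw [← Set.range_comp]
  exact seqClosure_eq_range hτ (g := fun k ↦ (X (φ k) ω, Y (φ k) ω)) (by fun_prop)

lemma range_unitInterval_toNNReal : Set.range unitInterval.toNNReal = Set.Icc 0 1 := by
  ext t
  refine ⟨?_, fun ht ↦ ⟨⟨t, t.2, ht.2⟩, rfl⟩⟩
  rintro ⟨i, rfl⟩
  exact ⟨zero_le, i.2.2⟩

/-- The values of a continuous pre-Brownian motion along a sequence of times in `[0, 1]` have a
square integrable supremum. -/
lemma IsPreBrownianReal.lintegral_iSup_enorm_sq_ne_top (hX : IsPreBrownianReal X P)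
    (hXc : ∀ ω, Continuous (X · ω)) {s : ℕ → ℝ≥0} (hs : ∀ n, s n ≤ 1) :
    ∫⁻ ω, (⨆ n, ‖X (s n) ω‖ₑ) ^ 2 ∂P ≠ ∞ := by
  refine IsGaussianProcess.lintegral_iSup_enorm_sq_ne_top (hX.isGaussianProcess.comp_right s)
    (fun n ↦ hX.integral_eval _) (.of_forall fun ω ↦ ?_)
  obtain ⟨C, hC⟩ := (isCompact_Icc (a := (0 : ℝ≥0)) (b := 1)).exists_bound_of_continuousOn
    (hXc ω).continuousOn
  refine ne_top_of_le_ne_top (ENNReal.ofReal_ne_top (r := C)) (iSup_le fun n ↦ ?_)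
  rw [← ofReal_norm]
  exact ENNReal.ofReal_le_ofReal (hC _ ⟨zero_le, hs n⟩)

lemma lintegral_volume_seqClosure_ne_top (hX : IsPreBrownianReal X P)
    (hY : IsPreBrownianReal Y P) (hXc : ∀ ω, Continuous (X · ω)) (hYc : ∀ ω, Continuous (Y · ω))
    {s : ℕ → ℝ≥0} (hs : ∀ n, s n ≤ 1) :
    ∫⁻ ω, volume (seqClosure (planarSeq X Y s ω)) ∂P ≠ ∞ := by
  refine ne_top_of_le_ne_top ?_ (lintegral_mono fun ω ↦ volume_seqClosure_le _)
  have hmeas : AEMeasurable (fun ω ↦ (⨆ n, ‖X (s n) ω‖ₑ) ^ 2) P :=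
    (AEMeasurable.iSup fun n ↦ (hX.aemeasurable (s n)).enorm).pow_const 2
  simp only [planarSeq]
  rw [lintegral_const_mul' _ _ (by simp), lintegral_add_left' hmeas]
  exact ENNReal.mul_ne_top (by simp) (ENNReal.add_ne_top.2
    ⟨hX.lintegral_iSup_enorm_sq_ne_top hXc hs, hY.lintegral_iSup_enorm_sq_ne_top hYc hs⟩)

lemma measurable_volume_seqClosure_inter :
    Measurable fun z : ((ℕ → ℝ) × (ℕ → ℝ)) × ((ℕ → ℝ) × (ℕ → ℝ)) ↦
      volume (seqClosure z.1 ∩ seqClosure z.2) :=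
  measurable_measure_prodMk_left
    (((measurable_fst.fst.prodMk measurable_snd) measurableSet_mem_seqClosure).inter
      ((measurable_fst.snd.prodMk measurable_snd) measurableSet_mem_seqClosure))

/-- The increments of a pre-Brownian motion after time `1` and backwards from time `1`, both
sampled on `[0, 1]`, are independent with the same law. -/
lemma IsPreBrownianReal.map_increments [IsProbabilityMeasure P] (hX : IsPreBrownianReal X P)
    {Z : ℝ≥0 → Ω → ℝ} (hZ : IsPreBrownianReal Z P) {s : ℕ → ℝ≥0} (hs : ∀ n, s n ≤ 1) :
    P.map (fun ω ↦ ((fun n ↦ X (1 + s n) ω - X 1 ω), (fun n ↦ X (1 - s n) ω - X 1 ω))) =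
      (P.map fun ω n ↦ Z (s n) ω).prod (P.map fun ω n ↦ Z (s n) ω) := by
  have hrev : (fun ω n ↦ X (1 - s n) ω - X 1 ω) =
      fun ω n ↦ X (1 - s n) ω - X 1 ω + (X (max (s n) 1) ω - X 1 ω) := by
    ext ω n
    simp [max_eq_right (hs n)]
  have hind : IndepFun (fun ω n ↦ X (1 + s n) ω - X 1 ω) (fun ω n ↦ X (1 - s n) ω - X 1 ω) P :=
    (hX.indepFun_shift 1).comp (φ := fun (w : ℝ≥0 → ℝ) (n : ℕ) ↦ w (s n))
      (ψ := fun (w : Set.Iic (1 : ℝ≥0) → ℝ) (n : ℕ) ↦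
        w ⟨1 - s n, Set.mem_Iic.2 tsub_le_self⟩ - w ⟨1, Set.mem_Iic.2 le_rfl⟩)
      (by fun_prop) (by fun_prop)
  rw [hind.map_prod_eq_prod_map_map ((hX.shift 1).aemeasurable_comp s)
    (hrev ▸ hX.reverse.aemeasurable_comp s), hrev, (hX.shift 1).map_comp_eq hZ,
    hX.reverse.map_comp_eq hZ]

/-- The parts of a planar Brownian path over the time intervals `[1, 2]` and `[0, 1]` have a
negligible intersection: by scaling and stationarity of the increments, the expected area of their
union is the sum of their expected areas. -/
lemma ae_volume_inter_eq_zero [IsProbabilityMeasure P] (hX : IsPreBrownianReal X P)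
    (hY : IsPreBrownianReal Y P) (hXc : ∀ ω, Continuous (X · ω)) (hYc : ∀ ω, Continuous (Y · ω))
    (hXY : IndepFun (fun ω t ↦ X t ω) (fun ω t ↦ Y t ω) P) {τ : ℕ → unitInterval}
    (hτ : DenseRange τ) :
    ∀ᵐ ω ∂P, volume
      (seqClosure (planarSeq X Y (fun n ↦ 1 + unitInterval.toNNReal (τ n)) ω) ∩
        seqClosure (planarSeq X Y (fun n ↦ 1 - unitInterval.toNNReal (τ n)) ω)) = 0 := by
  set s : ℕ → ℝ≥0 := fun n ↦ unitInterval.toNNReal (τ n)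
  have hs n : s n ≤ 1 := (τ n).2.2
  set h : (ℕ → ℝ) × (ℕ → ℝ) → ℝ≥0∞ := fun p ↦ volume (seqClosure p)
  have hh : Measurable h := measurable_volume_seqClosure
  have hXYcomp {φ : (ℝ≥0 → ℝ) → ℕ → ℝ} (hφ : Measurable φ) :
      IndepFun (fun ω ↦ φ (fun t ↦ X t ω)) (fun ω ↦ φ (fun t ↦ Y t ω)) P := hXY.comp hφ hφ
  have hm (r : ℕ → ℝ≥0) : AEMeasurable (planarSeq X Y r) P :=
    (hX.aemeasurable_comp r).prodMk (hY.aemeasurable_comp r)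
  have hfin : ∫⁻ ω, h (planarSeq X Y s ω) ∂P ≠ ∞ :=
    lintegral_volume_seqClosure_ne_top hX hY hXc hYc hs
  have hlaw {X' Y' : ℝ≥0 → Ω → ℝ} (hX' : IsPreBrownianReal X' P) (hY' : IsPreBrownianReal Y' P)
      (hX'Y' : IndepFun (fun ω n ↦ X' (s n) ω) (fun ω n ↦ Y' (s n) ω) P) :
      ∫⁻ ω, h (planarSeq X' Y' s ω) ∂P = ∫⁻ ω, h (planarSeq X Y s ω) ∂P := by
    have hm' : AEMeasurable (planarSeq X' Y' s) P :=
      (hX'.aemeasurable_comp s).prodMk (hY'.aemeasurable_comp s)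
    rw [← lintegral_map' hh.aemeasurable (hm s), ← lintegral_map' hh.aemeasurable hm',
      hX'.map_planarSeq hY' hX s hX'Y', hX.map_planarSeq hY hX s
        (hXYcomp (φ := fun w n ↦ w (s n)) (by fun_prop))]
  have hshift : ∫⁻ ω, h (planarSeq X Y (fun n ↦ 1 + s n) ω) ∂P =
      ∫⁻ ω, h (planarSeq X Y s ω) ∂P := by
    rw [← hlaw (hX.shift 1) (hY.shift 1)
      (hXYcomp (φ := fun w n ↦ w (1 + s n) - w 1) (by fun_prop))]
    refine lintegral_congr fun ω ↦ ?_
    have := volume_seqClosure_sub_inter (planarSeq X Y (fun n ↦ 1 + s n) ω)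
      (planarSeq X Y (fun n ↦ 1 + s n) ω) (X 1 ω, Y 1 ω)
    rw [Set.inter_self, Set.inter_self] at this
    exact this.symm
  have hscale : ∫⁻ ω, h (planarSeq X Y (fun n ↦ 2 * s n) ω) ∂P =
      2 * ∫⁻ ω, h (planarSeq X Y s ω) ∂P := by
    rw [← hlaw (hX.smul two_ne_zero) (hY.smul two_ne_zero)
      (hXYcomp (φ := fun w n ↦ (√(2 : ℝ≥0))⁻¹ * w (2 * s n)) (by fun_prop)),
      ← lintegral_const_mul' _ _ (by simp)]
    refine lintegral_congr fun ω ↦ ?_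
    simp only [h]
    rw [show planarSeq (fun t ω ↦ (√(2 : ℝ≥0))⁻¹ * X (2 * t) ω)
      (fun t ω ↦ (√(2 : ℝ≥0))⁻¹ * Y (2 * t) ω) s ω =
        (√(2 : ℝ≥0))⁻¹ • planarSeq X Y (fun n ↦ 2 * s n) ω from rfl, volume_seqClosure_smul,
      ← mul_assoc, inv_pow, Real.sq_sqrt (by simp), ENNReal.ofReal_inv_of_pos (by simp)]
    simp [ENNReal.mul_inv_cancel]
  have himage {φ : ℝ≥0 → ℝ≥0} (hφ : Continuous φ) ω :
      seqClosure (planarSeq X Y (fun n ↦ φ (s n)) ω) =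
        (fun t ↦ (X t ω, Y t ω)) '' (φ '' Set.Icc 0 1) := by
    rw [← range_unitInterval_toNNReal, ← Set.range_comp]
    exact seqClosure_planarSeq (hXc ω) (hYc ω) hτ (hφ.comp unitInterval.toNNReal_continuous)
  have hA ω : seqClosure (planarSeq X Y s ω) = (fun t ↦ (X t ω, Y t ω)) '' Set.Icc 0 1 := by
    simpa using himage continuous_id ω
  have hC ω : seqClosure (planarSeq X Y (fun n ↦ 1 + s n) ω) =
      (fun t ↦ (X t ω, Y t ω)) '' Set.Icc 1 2 := by
    rw [himage (φ := fun t ↦ 1 + t) (by fun_prop), Set.image_const_add_Icc, add_zero,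
      one_add_one_eq_two]
  have hAC ω : seqClosure (planarSeq X Y (fun n ↦ 2 * s n) ω) =
      (fun t ↦ (X t ω, Y t ω)) '' Set.Icc 0 2 := by
    rw [himage (φ := fun t ↦ 2 * t) (by fun_prop)]
    congr 1
    refine Set.Subset.antisymm (Set.image_subset_iff.2 fun t ht ↦ ⟨zero_le, ?_⟩)
      fun t ht ↦ ⟨t / 2, ⟨zero_le, ?_⟩, mul_div_cancel₀ t two_ne_zero⟩
    · simpa using mul_le_mul_right ht.2 2
    · exact div_le_one_of_le₀ ht.2 zero_le
  have hArev ω : seqClosure (planarSeq X Y (fun n ↦ 1 - s n) ω) =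
      (fun t ↦ (X t ω, Y t ω)) '' Set.Icc 0 1 := by
    rw [himage (φ := fun t ↦ 1 - t) (by fun_prop)]
    congr 1
    exact Set.Subset.antisymm (Set.image_subset_iff.2 fun t ht ↦ ⟨zero_le, tsub_le_self⟩)
      fun t ht ↦ ⟨1 - t, ⟨zero_le, tsub_le_self⟩, tsub_tsub_cancel_of_le ht.2⟩
  have hadd ω : h (planarSeq X Y (fun n ↦ 2 * s n) ω) +
      volume (seqClosure (planarSeq X Y (fun n ↦ 1 + s n) ω) ∩
        seqClosure (planarSeq X Y (fun n ↦ 1 - s n) ω)) =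
      h (planarSeq X Y (fun n ↦ 1 + s n) ω) + h (planarSeq X Y s ω) := by
    simp only [h]
    rw [hArev, ← hA, ← measure_union_add_inter _ (isClosed_seqClosure _).measurableSet]
    congr 2
    rw [hAC, hC, hA, Set.union_comm, ← Set.image_union, Set.Icc_union_Icc_eq_Icc]
    all_goals norm_num
  have hhm (r : ℕ → ℝ≥0) : AEMeasurable (fun ω ↦ h (planarSeq X Y r ω)) P :=
    hh.comp_aemeasurable (hm r)
  have hint := lintegral_congr (μ := P) hadd
  rw [lintegral_add_left' (hhm _), hscale, lintegral_add_left' (hhm _), hshift, ← two_mul] at hint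
  have hzero := (ENNReal.add_right_inj (ENNReal.mul_ne_top ENNReal.ofNat_ne_top hfin)).1
    (hint.trans (add_zero _).symm)
  exact (lintegral_eq_zero_iff'
    (measurable_volume_seqClosure_inter.comp_aemeasurable ((hm _).prodMk (hm _)))).1 hzero

/-- The values of a planar Brownian motion along a dense sequence of times in `[0, 1]` have a
negligible closure. -/
lemma ae_volume_seqClosure_eq_zero [IsProbabilityMeasure P] (hX : IsPreBrownianReal X P)
    (hY : IsPreBrownianReal Y P) (hXc : ∀ ω, Continuous (X · ω)) (hYc : ∀ ω, Continuous (Y · ω))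
    (hXY : IndepFun (fun ω t ↦ X t ω) (fun ω t ↦ Y t ω) P) {τ : ℕ → unitInterval}
    (hτ : DenseRange τ) :
    ∀ᵐ ω ∂P, volume (seqClosure (planarSeq X Y (fun n ↦ unitInterval.toNNReal (τ n)) ω)) = 0 := by
  set s : ℕ → ℝ≥0 := fun n ↦ unitInterval.toNNReal (τ n)
  have hs n : s n ≤ 1 := (τ n).2.2
  set ν := P.map (fun ω n ↦ X (s n) ω) with hν
  have : IsProbabilityMeasure ν := Measure.isProbabilityMeasure_map (hX.aemeasurable_comp s)
  have hφ : Measurable fun (w : ℝ≥0 → ℝ) ↦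
      ((fun n ↦ w (1 + s n) - w 1), (fun n ↦ w (1 - s n) - w 1)) := by fun_prop
  have hmI {Z : ℝ≥0 → Ω → ℝ} (hZ : IsPreBrownianReal Z P) : AEMeasurable
      (fun ω ↦ ((fun n ↦ Z (1 + s n) ω - Z 1 ω), (fun n ↦ Z (1 - s n) ω - Z 1 ω))) P :=
    (aemeasurable_pi_lambda _ fun _ ↦ (hZ.aemeasurable _).sub (hZ.aemeasurable _)).prodMk
      (aemeasurable_pi_lambda _ fun _ ↦ (hZ.aemeasurable _).sub (hZ.aemeasurable _))
  have hmap : P.map (fun ω ↦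
      (((fun n ↦ X (1 + s n) ω - X 1 ω), (fun n ↦ X (1 - s n) ω - X 1 ω)),
        ((fun n ↦ Y (1 + s n) ω - Y 1 ω), (fun n ↦ Y (1 - s n) ω - Y 1 ω)))) = _ :=
    (hXY.comp hφ hφ).map_prod_eq_prod_map_map (hmI hX) (hmI hY)
  rw [hX.map_increments hX hs, hY.map_increments hX hs, ← hν] at hmap
  have hcomm := measurePreserving_prodProdProdComm ν ν ν ν
  have hae : ∀ᵐ z ∂(ν.prod ν).prod (ν.prod ν),
      volume (seqClosure z.1 ∩ seqClosure z.2) = 0 := by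
    have hset : MeasurableSet {z : ((ℕ → ℝ) × (ℕ → ℝ)) × ((ℕ → ℝ) × (ℕ → ℝ)) |
        volume (seqClosure z.1 ∩ seqClosure z.2) = 0} :=
      measurable_volume_seqClosure_inter (measurableSet_singleton 0)
    rw [← hcomm.map_eq, ae_map_iff hcomm.aemeasurable hset, ← hmap]
    refine (ae_map_iff ((hmI hX).prodMk (hmI hY)) (hcomm.measurable hset)).2 ?_
    filter_upwards [ae_volume_inter_eq_zero hX hY hXc hYc hXY hτ] with ω hω
    rw [← hω]
    exact volume_seqClosure_sub_inter (planarSeq X Y (fun n ↦ 1 + s n) ω)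
      (planarSeq X Y (fun n ↦ 1 - s n) ω) (X 1 ω, Y 1 ω)
  have hmain := ae_measure_section_eq_zero measurableSet_mem_seqClosure hae
  rw [← hX.map_planarSeq hY hX s (hXY.comp (φ := fun (w : ℝ≥0 → ℝ) (n : ℕ) ↦ w (s n))
    (ψ := fun (w : ℝ≥0 → ℝ) (n : ℕ) ↦ w (s n)) (by fun_prop) (by fun_prop))] at hmain
  exact ae_of_ae_map ((hX.aemeasurable_comp s).prodMk (hY.aemeasurable_comp s)) hmain

end PlanarPath

end ProbabilityTheory

/-- Almost surely, the range `{B t : t ∈ [0,1]}` of planar Brownian motion has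
two-dimensional Lebesgue measure zero. -/
theorem planarBM_range_volume_zero {Ω : Type*} [MeasurableSpace Ω] (P : Measure Ω)
    [IsProbabilityMeasure P] (B : Ω → ℝ → ℝ × ℝ)
    (hB : IsPlanarBrownianMotion P B) :
    ∀ᵐ ω ∂P, volume (B ω '' Set.Icc (0 : ℝ) 1) = 0 := by
  obtain ⟨hcont, hind, hfst, hsnd⟩ := hB
  have hX : IsPreBrownianReal (fun (t : ℝ≥0) ω ↦ (B ω t).1) P :=
    isPreBrownianReal_of_map_sum_eq_gaussianReal fun n t c ↦
      hfst n (fun i ↦ t i) (fun i ↦ (t i).2) c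
  have hY : IsPreBrownianReal (fun (t : ℝ≥0) ω ↦ (B ω t).2) P :=
    isPreBrownianReal_of_map_sum_eq_gaussianReal fun n t c ↦
      hsnd n (fun i ↦ t i) (fun i ↦ (t i).2) c
  have hBc ω : Continuous fun t : ℝ≥0 ↦ B ω t :=
    (hcont ω).comp_continuous NNReal.continuous_coe fun t ↦ t.2
  have hXc ω : Continuous fun t : ℝ≥0 ↦ (B ω t).1 := (hBc ω).fst
  have hYc ω : Continuous fun t : ℝ≥0 ↦ (B ω t).2 := (hBc ω).snd
  have hXY : IndepFun (fun ω (t : ℝ≥0) ↦ (B ω t).1) (fun ω (t : ℝ≥0) ↦ (B ω t).2) P :=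
    hind.comp (φ := fun (w : ℝ → ℝ) (t : ℝ≥0) ↦ w t) (ψ := fun (w : ℝ → ℝ) (t : ℝ≥0) ↦ w t)
      (by fun_prop) (by fun_prop)
  have hτ := TopologicalSpace.denseRange_denseSeq unitInterval
  filter_upwards [ae_volume_seqClosure_eq_zero hX hY hXc hYc hXY hτ] with ω hω
  refine measure_mono_null ?_ hω
  rw [show (fun n ↦ unitInterval.toNNReal (TopologicalSpace.denseSeq unitInterval n)) =
    unitInterval.toNNReal ∘ TopologicalSpace.denseSeq unitInterval from rfl,
    seqClosure_planarSeq (hXc ω) (hYc ω) hτ (by fun_prop)]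
  rintro _ ⟨t, ht, rfl⟩
  exact ⟨⟨t, ht.1⟩, ⟨⟨t, ht⟩, rfl⟩, rfl⟩
end

section
/- Let B be a planar Brownian motion. Then almost surely the range {B(t) : t ∈ [0,1]} ⊆ ℝ² has Hausdorff dimension 2. -/
open MeasureTheory ProbabilityTheory
open scoped ENNReal NNReal

theorem ENNReal.rpow_neg_le_rpow_neg {a b : ℝ≥0∞} (h : a ≤ b) {r : ℝ} (hr : 0 ≤ r) :
    b ^ (-r) ≤ a ^ (-r) := by
  rw [ENNReal.rpow_neg, ENNReal.rpow_neg, ENNReal.inv_le_inv]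
  exact ENNReal.rpow_le_rpow h hr

/-- **Energy method**: a set charged by a finite measure of finite `d`-energy has Hausdorff
dimension at least `d`. -/
theorem le_dimH_of_lintegral_edist_rpow_ne_top {X : Type*} [EMetricSpace X]
    [SecondCountableTopology X] [MeasurableSpace X] [BorelSpace X] (μ : Measure X)
    [IsFiniteMeasure μ] {s : Set X} (hμs : μ s ≠ 0) (d : ℝ≥0)
    (hE : ∫⁻ x, ∫⁻ y, edist x y ^ (-(d : ℝ)) ∂μ ∂μ ≠ ∞) : (d : ℝ≥0∞) ≤ dimH s := by
  set φ : X → ℝ≥0∞ := fun x => ∫⁻ y, edist x y ^ (-(d : ℝ)) ∂μ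
  have hφm : Measurable φ :=
    Measurable.lintegral_prod_right' (f := fun p : X × X => edist p.1 p.2 ^ (-(d : ℝ)))
      (measurable_edist.pow_const _)
  obtain ⟨M, hM⟩ : ∃ M : ℕ, μ (s ∩ {x | φ x ≤ (M + 1 : ℕ)}) ≠ 0 := by
    by_contra! h
    refine hμs (measure_mono_null_ae ?_ (measure_iUnion_null h))
    filter_upwards [ae_lt_top hφm hE] with x hx hxs
    obtain ⟨n, hn⟩ := ENNReal.exists_nat_gt hx.ne
    exact Set.mem_iUnion.2 ⟨n, hxs, hn.le.trans (by exact_mod_cast n.le_succ)⟩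
  set c : ℝ≥0∞ := ((M + 1 : ℕ) : ℝ≥0∞) with hc
  have hc0 : c ≠ 0 := by simp [hc]
  have hct : c ≠ ∞ := ENNReal.natCast_ne_top _
  set A := {x | φ x ≤ c}
  have hAm : MeasurableSet A := hφm measurableSet_Iic
  have key : c⁻¹ • μ.restrict A ≤ μH[d] := by
    refine Measure.le_hausdorffMeasure _ _ 1 one_pos fun U _ => ?_
    rw [Measure.smul_apply, Measure.restrict_apply' hAm, smul_eq_mul]
    rcases (U ∩ A).eq_empty_or_nonempty with h | ⟨x, hxU, hxA⟩
    · simp [h]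
    have h1 : Metric.ediam U ^ (-(d : ℝ)) * μ U ≤ c :=
      calc Metric.ediam U ^ (-(d : ℝ)) * μ U
          ≤ Metric.ediam U ^ (-(d : ℝ)) *
              μ {y | Metric.ediam U ^ (-(d : ℝ)) ≤ edist x y ^ (-(d : ℝ))} := by
            gcongr
            exact fun y hy => ENNReal.rpow_neg_le_rpow_neg (Metric.edist_le_ediam_of_mem hxU hy) d.2
        _ ≤ φ x := mul_meas_ge_le_lintegral
            ((measurable_edist.comp (measurable_const.prodMk measurable_id)).pow_const _) _
        _ ≤ c := hxA
    rw [ENNReal.rpow_neg] at h1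
    rw [ENNReal.inv_mul_le_iff hc0 hct]
    refine (measure_mono Set.inter_subset_left).trans ?_
    rcases eq_or_ne (Metric.ediam U ^ (d : ℝ)) 0 with h | h
    · rw [h, ENNReal.inv_zero] at h1
      have : μ U = 0 := by
        by_contra hU
        rw [ENNReal.top_mul hU, top_le_iff] at h1
        exact hct h1
      simp [this]
    rcases eq_or_ne (Metric.ediam U ^ (d : ℝ)) ∞ with h' | h'
    · rw [h', ENNReal.mul_top hc0]
      exact le_top
    rwa [ENNReal.inv_mul_le_iff h h', mul_comm] at h1
  have h2 := key s
  refine le_dimH_of_hausdorffMeasure_ne_zero fun h0 => ?_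
  rw [h0, Measure.smul_apply, Measure.restrict_apply' hAm, smul_eq_mul, nonpos_iff_eq_zero,
    mul_eq_zero, ENNReal.inv_eq_zero] at h2
  exact h2.elim hct hM

theorem lintegral_Icc_enorm_rpow_neg_ne_top {β : ℝ} (hβ : β < 1) :
    ∫⁻ x in Set.Icc (-1 : ℝ) 1, ‖x‖ₑ ^ (-β) ≠ ∞ := by
  have h1 : ∫⁻ x in Set.Ioc (0 : ℝ) 1, ‖x‖ₑ ^ (-β) ≠ ∞ := by
    have h := (intervalIntegral.intervalIntegrable_rpow' (a := 0) (b := 1)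
      (show -1 < -β by linarith)).1
    refine ne_of_eq_of_ne (setLIntegral_congr_fun measurableSet_Ioc fun x hx => ?_) h.2.ne
    simp only
    rw [Real.enorm_eq_ofReal hx.1.le, Real.enorm_eq_ofReal (Real.rpow_nonneg hx.1.le _),
      ENNReal.ofReal_rpow_of_pos hx.1]
  have h2 : ∫⁻ x in Set.Ico (-1 : ℝ) 0, ‖x‖ₑ ^ (-β) ≠ ∞ := by
    have h := (Measure.measurePreserving_neg (volume : Measure ℝ)).setLIntegral_comp_preimage_emb
      (MeasurableEquiv.neg ℝ).measurableEmbedding (fun x => ‖x‖ₑ ^ (-β)) (Set.Ioc 0 1)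
    simp only [enorm_neg, Set.neg_preimage, Set.neg_Ioc, neg_zero] at h
    rwa [h]
  have hsub : Set.Icc (-1 : ℝ) 1 ≤ᵐ[volume] (Set.Ico (-1 : ℝ) 0 ∪ Set.Ioc 0 1 : Set ℝ) := by
    filter_upwards [compl_mem_ae_iff.2 (measure_singleton (0 : ℝ))] with x hx hx1
    rcases lt_or_gt_of_ne (show x ≠ 0 from hx) with h | h
    · exact Or.inl ⟨hx1.1, h⟩
    · exact Or.inr ⟨h, hx1.2⟩
  refine ne_top_of_le_ne_top (ENNReal.add_ne_top.2 ⟨h2, h1⟩) ?_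
  exact (lintegral_mono' (Measure.restrict_mono_ae hsub) le_rfl).trans (lintegral_union_le _ _ _)

theorem setLIntegral_enorm_sub_rpow_neg_le (β : ℝ) {s : ℝ} (hs : s ∈ Set.Icc (0 : ℝ) 1) :
    ∫⁻ t in Set.Icc (0 : ℝ) 1, ‖s - t‖ₑ ^ (-β) ≤ ∫⁻ x in Set.Icc (-1 : ℝ) 1, ‖x‖ₑ ^ (-β) := by
  have h := (Measure.measurePreserving_sub_left (volume : Measure ℝ)
    s).setLIntegral_comp_preimage_emb (MeasurableEquiv.subLeft s).measurableEmbedding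
    (fun x => ‖x‖ₑ ^ (-β)) (Set.Icc (-1) 1)
  rw [← h]
  refine lintegral_mono_set fun t ht => ?_
  exact ⟨by linarith [hs.1, ht.2], by linarith [hs.2, ht.1]⟩

theorem lintegral_enorm_rpow_neg_gaussianReal_one_ne_top {β : ℝ} (h0 : 0 ≤ β) (hβ : β < 1) :
    ∫⁻ x, ‖x‖ₑ ^ (-β) ∂(gaussianReal 0 1) ≠ ∞ := by
  have hpdf : ∀ x, gaussianPDF 0 1 x ≤ 1 := fun x => by
    rw [gaussianPDF_def, ← ENNReal.ofReal_one]
    refine ENNReal.ofReal_le_ofReal ?_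
    rw [gaussianPDFReal_def]
    refine mul_le_one₀ (inv_le_one_of_one_le₀ ?_) (Real.exp_nonneg _) (Real.exp_le_one_iff.2 ?_)
    · rw [Real.one_le_sqrt]
      push_cast
      nlinarith [Real.pi_gt_three]
    · push_cast
      nlinarith [sq_nonneg (x - 0)]
  have hle : gaussianReal 0 1 ≤ volume := by
    rw [gaussianReal_of_var_ne_zero _ one_ne_zero]
    conv_rhs => rw [← withDensity_one (μ := volume)]
    exact withDensity_mono (Filter.Eventually.of_forall hpdf)
  rw [← lintegral_add_compl _ (measurableSet_Icc (a := (-1 : ℝ)) (b := 1))]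
  refine ENNReal.add_ne_top.2 ⟨ne_top_of_le_ne_top (lintegral_Icc_enorm_rpow_neg_ne_top hβ)
    (lintegral_mono' (Measure.restrict_mono_measure hle _) le_rfl), ?_⟩
  refine ne_top_of_le_ne_top ENNReal.one_ne_top (b := 1) ?_
  calc ∫⁻ x in (Set.Icc (-1 : ℝ) 1)ᶜ, ‖x‖ₑ ^ (-β) ∂(gaussianReal 0 1)
      ≤ ∫⁻ x in (Set.Icc (-1 : ℝ) 1)ᶜ, 1 ∂(gaussianReal 0 1) := by
        refine setLIntegral_mono measurable_const fun x hx => ?_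
        have : 1 ≤ ‖x‖ₑ := by
          rw [← ofReal_norm, ENNReal.one_le_ofReal, Real.norm_eq_abs]
          by_contra! h
          exact hx (abs_le.1 h.le)
        simpa using ENNReal.rpow_neg_le_rpow_neg this h0
    _ ≤ 1 := by simpa using prob_le_one

theorem lintegral_enorm_rpow_neg_gaussianReal {β v : ℝ} (hv : 0 < v) :
    ∫⁻ x, ‖x‖ₑ ^ (-β) ∂(gaussianReal 0 v.toNNReal) =
      ‖√v‖ₑ ^ (-β) * ∫⁻ x, ‖x‖ₑ ^ (-β) ∂(gaussianReal 0 1) := by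
  have h := gaussianReal_map_const_mul (μ := 0) (v := 1) (√v)
  have hv' : (NNReal.mk ((√v) ^ 2) (sq_nonneg _)) * 1 = v.toNNReal := by
    ext; simp [Real.sq_sqrt hv.le, hv.le]
  rw [mul_zero, hv'] at h
  rw [← h, lintegral_map (by fun_prop) (by fun_prop), ← lintegral_const_mul _ (by fun_prop)]
  refine lintegral_congr fun x => ?_
  rw [enorm_mul, ENNReal.mul_rpow_of_ne_top enorm_ne_top enorm_ne_top]

theorem edist_prod_rpow_neg_le (p q : ℝ × ℝ) {β : ℝ} (hβ : 0 ≤ β) :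
    edist p q ^ (-(2 * β)) ≤ ‖p.1 - q.1‖ₑ ^ (-β) * ‖p.2 - q.2‖ₑ ^ (-β) := by
  have h : edist p q ^ (-(2 * β)) = edist p q ^ (-β) * edist p q ^ (-β) := by
    rw [show -(2 * β) = -β * 2 by ring, ENNReal.rpow_mul, ENNReal.rpow_two, sq]
  rw [h, ← edist_eq_enorm_sub, ← edist_eq_enorm_sub, Prod.edist_eq]
  gcongr ?_ * ?_
  · exact ENNReal.rpow_neg_le_rpow_neg (le_max_left _ _) hβ
  · exact ENNReal.rpow_neg_le_rpow_neg (le_max_right _ _) hβ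

namespace IsPlanarBrownianMotion

variable {Ω : Type*} [MeasurableSpace Ω] {P : Measure Ω} {B : Ω → ℝ → ℝ × ℝ}

theorem aemeasurable_fst (hB : IsPlanarBrownianMotion P B) {n : ℕ} {t : Fin n → ℝ}
    (ht : ∀ i, 0 ≤ t i) (c : Fin n → ℝ) :
    AEMeasurable (fun ω => ∑ i, c i * (B ω (t i)).1) P :=
  aemeasurable_of_map_neZero (by rw [hB.2.2.1 n t ht c]; infer_instance)

theorem aemeasurable_snd (hB : IsPlanarBrownianMotion P B) {n : ℕ} {t : Fin n → ℝ}
    (ht : ∀ i, 0 ≤ t i) (c : Fin n → ℝ) :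
    AEMeasurable (fun ω => ∑ i, c i * (B ω (t i)).2) P :=
  aemeasurable_of_map_neZero (by rw [hB.2.2.2 n t ht c]; infer_instance)

theorem aemeasurable (hB : IsPlanarBrownianMotion P B) {t : ℝ} (ht : 0 ≤ t) :
    AEMeasurable (fun ω => B ω t) P := by
  have h1 := hB.aemeasurable_fst (t := fun _ : Fin 1 => t) (fun _ => ht) 1
  have h2 := hB.aemeasurable_snd (t := fun _ : Fin 1 => t) (fun _ => ht) 1
  simp only [Finset.univ_unique, Pi.one_apply, one_mul, Finset.sum_const,
    Finset.card_singleton, one_smul] at h1 h2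
  exact h1.prodMk h2

theorem measurable_completion (hB : IsPlanarBrownianMotion P B) {t : ℝ} (ht : 0 ≤ t) :
    Measurable (fun ω : NullMeasurableSpace Ω P => B ω t) :=
  (hB.aemeasurable ht).nullMeasurable.measurable'

theorem completion (hB : IsPlanarBrownianMotion P B) :
    IsPlanarBrownianMotion (Ω := NullMeasurableSpace Ω P) P.completion B := by
  refine ⟨hB.1, ?_, fun n t ht c => ?_, fun n t ht c => ?_⟩
  · have h := hB.2.1
    rw [indepFun_iff_measure_inter_preimage_eq_mul] at h ⊢
    exact h
  · rw [← hB.2.2.1 n t ht c]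
    have h := hB.aemeasurable_fst ht c
    ext s hs
    rw [Measure.map_apply_of_aemeasurable h hs]
    exact Measure.map_apply (μ := P.completion) h.nullMeasurable.measurable' hs
  · rw [← hB.2.2.2 n t ht c]
    have h := hB.aemeasurable_snd ht c
    ext s hs
    rw [Measure.map_apply_of_aemeasurable h hs]
    exact Measure.map_apply (μ := P.completion) h.nullMeasurable.measurable' hs

theorem map_fst_sub (hB : IsPlanarBrownianMotion P B) {s t : ℝ} (hs : 0 ≤ s) (ht : 0 ≤ t) :
    P.map (fun ω => (B ω s).1 - (B ω t).1) = gaussianReal 0 |s - t|.toNNReal := by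
  have h := hB.2.2.1 2 ![s, t] (by simp [Fin.forall_fin_two, hs, ht]) ![1, -1]
  simp only [Fin.sum_univ_two, Matrix.cons_val_zero, Matrix.cons_val_one] at h
  convert h using 3
  · ring
  · rcases le_total s t with h | h
    · rw [abs_of_nonpos (by linarith)]; simp [h]; ring
    · rw [abs_of_nonneg (by linarith)]; simp [h]; ring

theorem map_snd_sub (hB : IsPlanarBrownianMotion P B) {s t : ℝ} (hs : 0 ≤ s) (ht : 0 ≤ t) :
    P.map (fun ω => (B ω s).2 - (B ω t).2) = gaussianReal 0 |s - t|.toNNReal := by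
  have h := hB.2.2.2 2 ![s, t] (by simp [Fin.forall_fin_two, hs, ht]) ![1, -1]
  simp only [Fin.sum_univ_two, Matrix.cons_val_zero, Matrix.cons_val_one] at h
  convert h using 3
  · ring
  · rcases le_total s t with h | h
    · rw [abs_of_nonpos (by linarith)]; simp [h]; ring
    · rw [abs_of_nonneg (by linarith)]; simp [h]; ring

theorem lintegral_edist_rpow_le (hB : IsPlanarBrownianMotion P B) {s t β : ℝ} (hs : 0 ≤ s)
    (ht : 0 ≤ t) (hst : s ≠ t) (hβ : 0 ≤ β) :
    ∫⁻ ω, edist (B ω s) (B ω t) ^ (-(2 * β)) ∂P ≤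
      (∫⁻ x, ‖x‖ₑ ^ (-β) ∂(gaussianReal 0 1)) ^ 2 * ‖s - t‖ₑ ^ (-β) := by
  have hpos : 0 < |s - t| := abs_pos.2 (sub_ne_zero.2 hst)
  have hm1 : AEMeasurable (fun ω => (B ω s).1 - (B ω t).1) P :=
    (hB.aemeasurable hs).fst.sub (hB.aemeasurable ht).fst
  have hm2 : AEMeasurable (fun ω => (B ω s).2 - (B ω t).2) P :=
    (hB.aemeasurable hs).snd.sub (hB.aemeasurable ht).snd
  have hφ : Measurable fun f : ℝ → ℝ => ‖f s - f t‖ₑ ^ (-β) := by fun_prop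
  have hg : Measurable fun x : ℝ => ‖x‖ₑ ^ (-β) := by fun_prop
  have hsq : ‖√|s - t|‖ₑ ^ (-β) * ‖√|s - t|‖ₑ ^ (-β) = ‖s - t‖ₑ ^ (-β) := by
    rw [← ENNReal.mul_rpow_of_ne_top enorm_ne_top enorm_ne_top, ← enorm_mul,
      Real.mul_self_sqrt hpos.le, Real.enorm_abs]
  calc ∫⁻ ω, edist (B ω s) (B ω t) ^ (-(2 * β)) ∂P
      ≤ ∫⁻ ω, ‖(B ω s).1 - (B ω t).1‖ₑ ^ (-β) * ‖(B ω s).2 - (B ω t).2‖ₑ ^ (-β) ∂P :=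
        lintegral_mono fun ω => edist_prod_rpow_neg_le _ _ hβ
    _ = (∫⁻ ω, ‖(B ω s).1 - (B ω t).1‖ₑ ^ (-β) ∂P) *
          ∫⁻ ω, ‖(B ω s).2 - (B ω t).2‖ₑ ^ (-β) ∂P :=
        lintegral_mul_eq_lintegral_mul_lintegral_of_indepFun'' (hm1.enorm.pow_const _)
          (hm2.enorm.pow_const _) (hB.2.1.comp hφ hφ)
    _ = _ := by
        rw [← lintegral_map' hg.aemeasurable hm1, ← lintegral_map' hg.aemeasurable hm2,
          hB.map_fst_sub hs ht, hB.map_snd_sub hs ht, lintegral_enorm_rpow_neg_gaussianReal hpos,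
          ← hsq]
        ring

theorem continuous_max (hB : IsPlanarBrownianMotion P B) (ω : Ω) :
    Continuous fun t => B ω (max t 0) :=
  (hB.1 ω).comp_continuous (by fun_prop) fun t => Set.mem_Ici.2 (le_max_right t 0)

theorem measurable_edist_rpow (hB : IsPlanarBrownianMotion P B)
    (hm : ∀ t, 0 ≤ t → Measurable fun ω => B ω t) (r : ℝ) :
    Measurable fun p : (Ω × ℝ) × ℝ =>
      edist (B p.1.1 (max p.1.2 0)) (B p.1.1 (max p.2 0)) ^ r := by
  have hjoint : Measurable (Function.uncurry fun (t : ℝ) (ω : Ω) => B ω (max t 0)) :=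
    measurable_uncurry_of_continuous_of_measurable (fun ω => hB.continuous_max ω)
      fun t => hm _ (le_max_right _ _)
  exact ((hjoint.comp (measurable_fst.snd.prodMk measurable_fst.fst)).edist
      (hjoint.comp (measurable_snd.prodMk measurable_fst.fst))).pow_const _

theorem lintegral_potential_le [SFinite P] (hB : IsPlanarBrownianMotion P B)
    (hm : ∀ t, 0 ≤ t → Measurable fun ω => B ω t) {β : ℝ} (hβ : 0 ≤ β) {s : ℝ}
    (hs : s ∈ Set.Icc (0 : ℝ) 1) :
    ∫⁻ ω, (∫⁻ t in Set.Icc (0 : ℝ) 1,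
        edist (B ω (max s 0)) (B ω (max t 0)) ^ (-(2 * β))) ∂P ≤
      (∫⁻ x, ‖x‖ₑ ^ (-β) ∂(gaussianReal 0 1)) ^ 2 *
        ∫⁻ x in Set.Icc (-1 : ℝ) 1, ‖x‖ₑ ^ (-β) := by
  have hF : Measurable (Function.uncurry fun (ω : Ω) (t : ℝ) =>
      edist (B ω (max s 0)) (B ω (max t 0)) ^ (-(2 * β))) :=
    (hB.measurable_edist_rpow hm (-(2 * β))).comp
      (g := fun p : (Ω × ℝ) × ℝ =>
        edist (B p.1.1 (max p.1.2 0)) (B p.1.1 (max p.2 0)) ^ (-(2 * β)))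
      (f := fun q : Ω × ℝ => ((q.1, s), q.2)) (by fun_prop)
  rw [lintegral_lintegral_swap hF.aemeasurable]
  refine le_trans (lintegral_mono_ae (g := fun t =>
    (∫⁻ x, ‖x‖ₑ ^ (-β) ∂(gaussianReal 0 1)) ^ 2 * ‖s - t‖ₑ ^ (-β)) ?_) ?_
  · filter_upwards [ae_restrict_mem measurableSet_Icc,
      ae_restrict_of_ae (compl_mem_ae_iff.2 (measure_singleton s))] with t ht hts
    rw [max_eq_left hs.1, max_eq_left ht.1]
    exact hB.lintegral_edist_rpow_le hs.1 ht.1 (Ne.symm hts) hβ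
  · rw [lintegral_const_mul _ (by fun_prop)]
    exact mul_le_mul_right (setLIntegral_enorm_sub_rpow_neg_le β hs) _

theorem ae_energy_ne_top [SFinite P] (hB : IsPlanarBrownianMotion P B)
    (hm : ∀ t, 0 ≤ t → Measurable fun ω => B ω t) {β : ℝ} (hβ0 : 0 ≤ β) (hβ : β < 1) :
    ∀ᵐ ω ∂P, ∫⁻ s in Set.Icc (0 : ℝ) 1, ∫⁻ t in Set.Icc (0 : ℝ) 1,
      edist (B ω (max s 0)) (B ω (max t 0)) ^ (-(2 * β)) ≠ ∞ := by
  have hG : Measurable (Function.uncurry fun (ω : Ω) (s : ℝ) => ∫⁻ t in Set.Icc (0 : ℝ) 1,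
      edist (B ω (max s 0)) (B ω (max t 0)) ^ (-(2 * β))) :=
    (hB.measurable_edist_rpow hm _).lintegral_prod_right'
  have hH : Measurable fun ω => ∫⁻ s in Set.Icc (0 : ℝ) 1, ∫⁻ t in Set.Icc (0 : ℝ) 1,
      edist (B ω (max s 0)) (B ω (max t 0)) ^ (-(2 * β)) := hG.lintegral_prod_right'
  have hfin := ENNReal.mul_ne_top
    (ENNReal.pow_ne_top (n := 2) (lintegral_enorm_rpow_neg_gaussianReal_one_ne_top hβ0 hβ))
    (lintegral_Icc_enorm_rpow_neg_ne_top hβ)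
  refine (ae_lt_top hH (ne_top_of_le_ne_top hfin ?_)).mono fun ω hω => hω.ne
  rw [lintegral_lintegral_swap hG.aemeasurable]
  refine (setLIntegral_mono measurable_const fun s hs =>
    hB.lintegral_potential_le hm hβ0 hs).trans ?_
  rw [setLIntegral_const, Real.volume_Icc, sub_zero, ENNReal.ofReal_one, mul_one]

theorem ae_le_dimH [SFinite P] (hB : IsPlanarBrownianMotion P B)
    (hm : ∀ t, 0 ≤ t → Measurable fun ω => B ω t) {β : ℝ≥0} (hβ : β < 1) :
    ∀ᵐ ω ∂P, ((2 * β : ℝ≥0) : ℝ≥0∞) ≤ dimH (B ω '' Set.Icc (0 : ℝ) 1) := by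
  filter_upwards [hB.ae_energy_ne_top hm β.2 (by exact_mod_cast hβ)] with ω hω
  have hc := (hB.continuous_max ω).measurable
  have hme : Measurable fun p : (ℝ × ℝ) × (ℝ × ℝ) => edist p.1 p.2 ^ (-(2 * (β : ℝ))) :=
    measurable_edist.pow_const _
  have himg : B ω '' Set.Icc (0 : ℝ) 1 = (fun t => B ω (max t 0)) '' Set.Icc (0 : ℝ) 1 :=
    Set.image_congr fun t ht => by rw [max_eq_left ht.1]
  refine le_dimH_of_lintegral_edist_rpow_ne_top
    ((volume.restrict (Set.Icc (0 : ℝ) 1)).map fun t => B ω (max t 0)) ?_ _ ?_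
  · rw [himg, Measure.map_apply hc
      (isCompact_Icc.image (hB.continuous_max ω)).isClosed.measurableSet]
    refine ne_of_gt (lt_of_lt_of_le ?_ (measure_mono (Set.subset_preimage_image _ _)))
    simp
  · push_cast
    rw [lintegral_map hme.lintegral_prod_right' hc]
    refine ne_of_eq_of_ne (lintegral_congr fun s => ?_) hω
    exact lintegral_map (hme.comp (measurable_const.prodMk measurable_id)) hc

end IsPlanarBrownianMotion

/-- Almost surely, the range `{B t : t ∈ [0,1]}` of planar Brownian motion has
Hausdorff dimension `2`. -/
theorem planarBM_range_dimH {Ω : Type*} [MeasurableSpace Ω] (P : Measure Ω)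
    [IsProbabilityMeasure P] (B : Ω → ℝ → ℝ × ℝ)
    (hB : IsPlanarBrownianMotion P B) :
    ∀ᵐ ω ∂P, dimH (B ω '' Set.Icc (0 : ℝ) 1) = 2 := by
  have hlow : ∀ n : ℕ, ∀ᵐ ω ∂P,
      ((2 * (1 - 1 / ((n : ℝ≥0) + 1)) : ℝ≥0) : ℝ≥0∞) ≤ dimH (B ω '' Set.Icc (0 : ℝ) 1) := by
    intro n
    have hprob : IsProbabilityMeasure P.completion := ⟨measure_univ (μ := P)⟩
    exact hB.completion.ae_le_dimH (fun t ht => hB.measurable_completion ht)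
      (tsub_lt_self one_pos (by positivity))
  have hlim : Filter.Tendsto (fun n : ℕ => ((2 * (1 - 1 / ((n : ℝ≥0) + 1)) : ℝ≥0) : ℝ≥0∞))
      Filter.atTop (nhds 2) := by
    have h := (tendsto_one_div_add_atTop_nhds_zero_nat (𝕜 := ℝ≥0)).const_sub 1 |>.const_mul 2
    rw [tsub_zero, mul_one] at h
    exact ENNReal.tendsto_coe.2 h
  filter_upwards [ae_all_iff.2 hlow] with ω hω
  refine le_antisymm ?_ (le_of_tendsto' hlim hω)
  refine (dimH_mono (Set.subset_univ _)).trans ?_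
  rw [Real.dimH_univ_eq_finrank (ℝ × ℝ)]
  simp [Module.finrank_prod, one_add_one_eq_two]
end

section
/- Let B be a standard one-dimensional Brownian motion. Then almost surely, for every t ≥ 0 the function s ↦ B(s) is not differentiable at t. -/
open MeasureTheory ProbabilityTheory

/-- `B` is a standard one-dimensional Brownian motion (on times `t ≥ 0`) under the
probability measure `P`: each path is continuous on `[0, ∞)`, and `B` is a centered
Gaussian process with covariance `Cov(B_s, B_t) = min s t`, i.e. every finite linear
combination `∑ cᵢ B(tᵢ)` is centered Gaussian with variance `∑ᵢ ∑ⱼ cᵢ cⱼ min tᵢ tⱼ`. -/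
def IsBrownianMotion {Ω : Type*} [MeasurableSpace Ω] (P : Measure Ω)
    (B : Ω → ℝ → ℝ) : Prop :=
  (∀ ω, ContinuousOn (B ω) (Set.Ici 0)) ∧
  (∀ (n : ℕ) (t : Fin n → ℝ), (∀ i, 0 ≤ t i) → ∀ c : Fin n → ℝ,
    Measure.map (fun ω => ∑ i, c i * B ω (t i)) P =
      gaussianReal 0 (∑ i, ∑ j, c i * c j * min (t i) (t j)).toNNReal)

open scoped NNReal Topology
open Filter

namespace IsBrownianMotion

variable {Ω : Type*} [MeasurableSpace Ω] {P : Measure Ω} {B : Ω → ℝ → ℝ}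

lemma map_eval (hB : IsBrownianMotion P B) (t : ℝ≥0) :
    P.map (fun ω ↦ B ω t) = gaussianReal 0 t := by
  simpa using hB.2 1 (fun _ ↦ t) (by simp) (fun _ ↦ 1)

lemma aemeasurable (hB : IsBrownianMotion P B) (t : ℝ≥0) : AEMeasurable (fun ω ↦ B ω t) P :=
  AEMeasurable.of_map_ne_zero (by rw [hB.map_eval t]; exact IsProbabilityMeasure.ne_zero _)

lemma map_add (hB : IsBrownianMotion P B) {s t : ℝ≥0} (hst : s ≤ t) :
    P.map ((fun ω ↦ B ω s) + fun ω ↦ B ω t) = gaussianReal 0 (3 * s + t) := by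
  have hst' : (s : ℝ) ≤ t := hst
  have h := hB.2 2 ![(s : ℝ), t] (by simp [Fin.forall_fin_two]) (fun _ ↦ 1)
  simp only [Fin.sum_univ_two, Matrix.cons_val_zero, Matrix.cons_val_one, one_mul, min_self,
    min_eq_left hst', min_eq_right hst'] at h
  have hv : ((s : ℝ) + s + (s + t)).toNNReal = 3 * s + t := by
    rw [show (s : ℝ) + s + (s + t) = ((3 * s + t : ℝ≥0) : ℝ) by push_cast; ring,
      Real.toNNReal_coe]
  rw [hv] at h
  exact h

lemma isGaussianProcess (hB : IsBrownianMotion P B) :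
    IsGaussianProcess (fun (t : ℝ≥0) ω ↦ B ω t) P where
  hasGaussianLaw I := by
    refine ⟨isGaussian_of_map_eq_gaussianReal fun L ↦ ?_⟩
    have hmeas : AEMeasurable (fun ω ↦ I.restrict (fun t : ℝ≥0 ↦ B ω t)) P :=
      aemeasurable_pi_lambda _ fun i ↦ hB.aemeasurable i
    let e := I.equivFin.symm
    rw [AEMeasurable.map_map_of_aemeasurable (by fun_prop) hmeas]
    refine ⟨0, _, Eq.trans ?_ (hB.2 _ (fun i ↦ ((e i : ℝ≥0) : ℝ)) (by simp)
      (fun i ↦ L (Pi.single (e i) 1)))⟩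
    congr 1
    ext ω
    rw [Function.comp_apply, e.sum_comp (fun i : I ↦ L (Pi.single i 1) * B ω (i : ℝ≥0)),
      ← L.coe_coe, L.toLinearMap.pi_apply_eq_sum_univ]
    refine Finset.sum_congr rfl fun i _ ↦ ?_
    rw [smul_eq_mul, mul_comm]
    congr 2
    ext j
    simp [Pi.single_apply, eq_comm]

lemma isPreBrownianReal [IsProbabilityMeasure P] (hB : IsBrownianMotion P B) :
    IsPreBrownianReal (fun (t : ℝ≥0) ω ↦ B ω t) P := by
  have hlaw (t : ℝ≥0) : HasLaw (fun ω ↦ B ω t) (gaussianReal 0 t) P :=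
    ⟨hB.aemeasurable t, hB.map_eval t⟩
  refine hB.isGaussianProcess.isPreBrownianReal_of_covariance (fun t ↦ ?_) fun s t hst ↦ ?_
  · rw [(hlaw t).integral_eq, integral_id_gaussianReal]
  · have h := variance_add (hB.isGaussianProcess.hasGaussianLaw_eval s).memLp_two
      (hB.isGaussianProcess.hasGaussianLaw_eval t).memLp_two
    have hadd : HasLaw ((fun ω ↦ B ω s) + fun ω ↦ B ω t) (gaussianReal 0 (3 * s + t)) P :=
      ⟨(hB.aemeasurable s).add (hB.aemeasurable t), hB.map_add hst⟩
    rw [hadd.variance_eq, (hlaw s).variance_eq, (hlaw t).variance_eq] at h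
    simp only [variance_id_gaussianReal] at h
    push_cast at h
    linarith

end IsBrownianMotion

/-- A centered Gaussian with standard deviation `σ` lies in `[-a, a]` with probability at most
`2 * a / σ`. -/
lemma gaussianReal_Icc_le {σ : ℝ≥0} (hσ : σ ≠ 0) (a : ℝ) :
    gaussianReal 0 (σ ^ 2) (Set.Icc (-a) a) ≤ ENNReal.ofReal (2 * a / σ) := by
  have hσ' : (0 : ℝ) < σ := by positivity
  have hpdf (x : ℝ) : gaussianPDF 0 (σ ^ 2) x ≤ ENNReal.ofReal (σ : ℝ)⁻¹ := by
    refine ENNReal.ofReal_le_ofReal ?_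
    rw [gaussianPDFReal]
    have hexp : Real.exp (-(x - 0) ^ 2 / (2 * (σ ^ 2 : ℝ≥0))) ≤ 1 :=
      Real.exp_le_one_iff.2 (div_nonpos_of_nonpos_of_nonneg (by nlinarith) (by positivity))
    have hsqrt : (σ : ℝ) ≤ √(2 * Real.pi * (σ ^ 2 : ℝ≥0)) := by
      refine Real.le_sqrt_of_sq_le ?_
      push_cast
      nlinarith [Real.pi_gt_three, sq_nonneg (σ : ℝ)]
    calc _ ≤ (√(2 * Real.pi * (σ ^ 2 : ℝ≥0)))⁻¹ * 1 := by gcongr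
      _ ≤ _ := by rw [mul_one]; gcongr
  rw [gaussianReal_apply 0 (pow_ne_zero 2 hσ)]
  calc ∫⁻ x in Set.Icc (-a) a, gaussianPDF 0 (σ ^ 2) x
      ≤ ∫⁻ _ in Set.Icc (-a) a, ENNReal.ofReal (σ : ℝ)⁻¹ := lintegral_mono hpdf
    _ = ENNReal.ofReal (2 * a / σ) := by
      rw [setLIntegral_const, Real.volume_Icc, ← ENNReal.ofReal_mul (by positivity)]
      congr 1
      ring

/-- If `μ (s n) → 0`, then almost every point lies outside infinitely many of the sets `s n`. -/
lemma measure_setOf_eventually_mem_eq_zero {α : Type*} [MeasurableSpace α] {μ : Measure α}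
    {s : ℕ → Set α} (hs : Tendsto (fun n ↦ μ (s n)) atTop (𝓝 0)) :
    μ {x | ∀ᶠ n in atTop, x ∈ s n} = 0 := by
  have h : {x | ∀ᶠ n in atTop, x ∈ s n} = ⋃ N, ⋂ n ≥ N, s n := by
    ext x
    simp [eventually_atTop]
  rw [h, measure_iUnion_null_iff]
  intro N
  refine le_antisymm (ge_of_tendsto hs ?_) zero_le
  filter_upwards [eventually_ge_atTop N] with n hn
  exact measure_mono (Set.biInter_subset_of_mem hn)

/-- The paths which, for some `k < K * m ^ 2`, have three consecutive increments
of size at most `7 * M / m ^ 2` over intervals of length `1 / m ^ 2` starting from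
`(k + 1) / m ^ 2`. -/
def smallIncrements {Ω : Type*} (B : Ω → ℝ → ℝ) (K M m : ℕ) : Set Ω :=
  ⋃ k ∈ Finset.range (K * m ^ 2), ⋂ i ∈ Finset.range 3,
    (fun ω ↦ B ω (((k + 1 + (i + 1 : ℕ)) / m ^ 2 : ℝ≥0)) - B ω (((k + 1 + i) / m ^ 2 : ℝ≥0))) ⁻¹'
      Set.Icc (-(7 * M / m ^ 2 : ℝ)) (7 * M / m ^ 2)

namespace IsBrownianMotion

variable {Ω : Type*} [MeasurableSpace Ω] {P : Measure Ω} [IsProbabilityMeasure P]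
  {B : Ω → ℝ → ℝ}

lemma measure_smallIncrements_le (hB : IsBrownianMotion P B) (K M : ℕ) {m : ℕ} (hm : 0 < m) :
    P (smallIncrements B K M m) ≤ ENNReal.ofReal (K * (14 * M) ^ 3 / m) := by
  have hm' : (0 : ℝ) < m := by exact_mod_cast hm
  have hincr (k i : ℕ) : P ((fun ω ↦ B ω (((k + 1 + (i + 1 : ℕ)) / m ^ 2 : ℝ≥0)) -
      B ω (((k + 1 + i) / m ^ 2 : ℝ≥0))) ⁻¹' Set.Icc (-(7 * M / m ^ 2 : ℝ)) (7 * M / m ^ 2)) ≤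
      ENNReal.ofReal (14 * M / m) := by
    have hlaw := hB.isPreBrownianReal.hasLaw_sub ((k + 1 + (i + 1 : ℕ)) / m ^ 2)
      ((k + 1 + i) / m ^ 2)
    have hdist : nndist (((k + 1 + (i + 1 : ℕ)) / m ^ 2 : ℝ≥0) : ℝ)
        (((k + 1 + i) / m ^ 2 : ℝ≥0) : ℝ) = ((m : ℝ≥0)⁻¹) ^ 2 := by
      ext
      rw [coe_nndist, Real.dist_eq]
      push_cast
      rw [← sub_div, abs_of_nonneg (div_nonneg (by linarith) (by positivity))]
      field_simp
      ring
    erw [hdist] at hlaw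
    have hbound := gaussianReal_Icc_le (σ := (m : ℝ≥0)⁻¹) (by positivity) (7 * M / m ^ 2)
    rw [← hlaw.map_eq, Measure.map_apply_of_aemeasurable hlaw.aemeasurable measurableSet_Icc]
      at hbound
    refine hbound.trans (ENNReal.ofReal_le_ofReal (le_of_eq ?_))
    push_cast
    field_simp
    ring
  have hmono (k : ℕ) : Monotone fun i : ℕ ↦ ((k + 1 + i) / m ^ 2 : ℝ≥0) := by
    intro i j hij
    dsimp only
    gcongr
  have hindep (k : ℕ) := (hB.isPreBrownianReal.hasIndepIncrements.nat
    (hmono k)).measure_inter_preimage_eq_mul (Finset.range 3)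
    (sets := fun _ ↦ Set.Icc (-(7 * M / m ^ 2 : ℝ)) (7 * M / m ^ 2))
    fun _ _ ↦ measurableSet_Icc
  calc P (smallIncrements B K M m)
      ≤ ∑ k ∈ Finset.range (K * m ^ 2), ENNReal.ofReal (14 * M / m) ^ 3 := by
        refine (measure_biUnion_finset_le _ _).trans (Finset.sum_le_sum fun k _ ↦ ?_)
        rw [hindep k]
        refine (Finset.prod_le_pow_card _ _ _ fun i _ ↦ hincr k i).trans ?_
        simp
    _ = ENNReal.ofReal (K * (14 * M) ^ 3 / m) := by
      rw [Finset.sum_const, Finset.card_range, nsmul_eq_mul, ← ENNReal.ofReal_pow (by positivity),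
        ← ENNReal.ofReal_natCast, ← ENNReal.ofReal_mul (by positivity)]
      congr 1
      push_cast
      field_simp

lemma ae_frequently_notMem_smallIncrements (hB : IsBrownianMotion P B) :
    ∀ᵐ ω ∂P, ∀ K M : ℕ, ∃ᶠ m in atTop, ω ∉ smallIncrements B K M m := by
  refine ae_all_iff.2 fun K ↦ ae_all_iff.2 fun M ↦ ?_
  have hlim : Tendsto (fun m : ℕ ↦ ENNReal.ofReal (K * (14 * M) ^ 3 / m)) atTop (𝓝 0) := by
    have h := ENNReal.tendsto_ofReal
      (tendsto_const_div_atTop_nhds_zero_nat ((K : ℝ) * (14 * M) ^ 3))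
    rwa [ENNReal.ofReal_zero] at h
  have hnull := measure_setOf_eventually_mem_eq_zero (μ := P) (s := smallIncrements B K M)
    (tendsto_of_tendsto_of_tendsto_of_le_of_le' tendsto_const_nhds hlim
      (Eventually.of_forall fun _ ↦ zero_le)
      ((eventually_gt_atTop 0).mono fun m hm ↦ hB.measure_smallIncrements_le K M hm))
  filter_upwards [measure_eq_zero_iff_ae_notMem.1 hnull] with ω hω
  simpa [Filter.Frequently] using hω

end IsBrownianMotion

lemma eventually_mem_smallIncrements {Ω : Type*} {B : Ω → ℝ → ℝ} {ω : Ω} {t : ℝ} (ht : 0 ≤ t)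
    (h : DifferentiableWithinAt ℝ (B ω) (Set.Ici 0) t) :
    ∃ K M : ℕ, ∀ᶠ m in atTop, ω ∈ smallIncrements B K M m := by
  obtain ⟨c, hc⟩ := h.isBigO_sub.bound
  obtain ⟨M, hM⟩ := exists_nat_ge c
  obtain ⟨K, hK⟩ := exists_nat_gt t
  obtain ⟨δ, hδ, hball⟩ := Metric.mem_nhdsWithin_iff.1 hc
  have hlip (s : ℝ) (hs : t ≤ s) (hsδ : s - t < δ) : |B ω s - B ω t| ≤ M * (s - t) := by
    have hs' : s ∈ Metric.ball t δ ∩ Set.Ici 0 :=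
      ⟨by rwa [Metric.mem_ball, Real.dist_eq, abs_of_nonneg (sub_nonneg.2 hs)], ht.trans hs⟩
    have hbound : |B ω s - B ω t| ≤ c * |s - t| := hball hs'
    rw [abs_of_nonneg (sub_nonneg.2 hs)] at hbound
    exact hbound.trans (mul_le_mul_of_nonneg_right hM (sub_nonneg.2 hs))
  refine ⟨K, M, ?_⟩
  filter_upwards [eventually_gt_atTop 0,
    (tendsto_const_div_atTop_nhds_zero_nat (4 : ℝ)).eventually_lt_const hδ] with m hm hmδ
  have hm' : (1 : ℝ) ≤ m := by exact_mod_cast hm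
  have hm2 : (0 : ℝ) < m ^ 2 := by positivity
  have hfloor := Nat.floor_le (show 0 ≤ t * m ^ 2 by positivity)
  have hfloor' := Nat.lt_floor_add_one (t * m ^ 2)
  set k := ⌊t * m ^ 2⌋₊
  have hmesh : 4 / (m : ℝ) ^ 2 < δ := by
    refine lt_of_le_of_lt ?_ hmδ
    gcongr
    nlinarith
  have hgrid (x : ℝ) (hx1 : 1 ≤ x) (hx4 : x ≤ 4) :
      |B ω ((k + x) / m ^ 2) - B ω t| ≤ M * (x / m ^ 2) := by
    have hle : t ≤ (k + x) / m ^ 2 := by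
      rw [le_div_iff₀ hm2]
      linarith
    have hsub : (k + x) / m ^ 2 - t ≤ x / m ^ 2 := by
      rw [add_div, add_sub_right_comm, add_le_iff_nonpos_left, sub_nonpos, div_le_iff₀ hm2]
      exact hfloor
    have hx : x / (m : ℝ) ^ 2 ≤ 4 / m ^ 2 := by gcongr
    exact (hlip _ hle (by linarith)).trans (by gcongr)
  simp only [smallIncrements, Set.mem_iUnion, Set.mem_iInter, Set.mem_preimage, Set.mem_Icc,
    Finset.mem_range, ← abs_le, exists_prop]
  refine ⟨k, ?_, fun i hi ↦ ?_⟩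
  · have : (k : ℝ) < K * m ^ 2 := hfloor.trans_lt (by gcongr)
    exact_mod_cast this
  · have hi' : (i : ℝ) ≤ 2 := by exact_mod_cast Nat.le_of_lt_succ hi
    have h1 := hgrid (1 + (i + 1)) (by linarith [i.cast_nonneg (α := ℝ)]) (by linarith)
    have h0 := hgrid (1 + i) (by linarith [i.cast_nonneg (α := ℝ)]) (by linarith)
    push_cast
    rw [add_assoc (k : ℝ), add_assoc (k : ℝ)]
    rw [abs_sub_comm] at h0
    calc _ ≤ (M : ℝ) * ((1 + (i + 1)) / m ^ 2) + M * ((1 + i) / m ^ 2) :=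
          (abs_sub_le _ (B ω t) _).trans (add_le_add h1 h0)
      _ = (2 * i + 3) * M / m ^ 2 := by ring
      _ ≤ 7 * M / m ^ 2 := by gcongr; linarith

/-- Almost surely, a standard one-dimensional Brownian motion is nowhere differentiable:
for every `t ≥ 0`, the function `s ↦ B s` (on `[0, ∞)`) is not differentiable at `t`. -/
theorem bm_nowhere_differentiable {Ω : Type*} [MeasurableSpace Ω] (P : Measure Ω)
    [IsProbabilityMeasure P] (B : Ω → ℝ → ℝ)
    (hB : IsBrownianMotion P B) :
    ∀ᵐ ω ∂P, ∀ t : ℝ, 0 ≤ t → ¬ DifferentiableWithinAt ℝ (B ω) (Set.Ici 0) t := by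
  filter_upwards [hB.ae_frequently_notMem_smallIncrements] with ω hω t ht hdiff
  obtain ⟨K, M, h⟩ := eventually_mem_smallIncrements ht hdiff
  exact hω K M (h.mono fun m hm ↦ not_not_intro hm)
end
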